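/- Let F be a field and let A be a finite-dimensional Hopf algebra over F. Then for every finite-dimensional (left) A-module V, the F-vector space Hom_A(V, A) of A-module homomorphisms from V to the left regular A-module A has dimension dim_F Hom_A(V, A) = dim_F V. -/

import Mathlib

/-!
Let `A*` be the dual of `A`. If `k : V → A` is `A`-linear and `φ ∈ A*`, then
`v ↦ φ ⇀ k v` is a linear map `V → A`, where `φ ⇀ a = ∑ φ(a₂) a₁`. This yields an isomorphism
`Hom_A(V, A ⊗ A*) ≃ Hom(V, A)`, and counting dimensions proves the theorem. That it is an
isomorphism means that the free module `A ⊗ A*` is coinduced: `a ⊗ φ ↦ (x ↦ φ ⇀ (x a))` is a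
bijection onto `Hom(A, A)`. Now `φ ⇀ (x a) = ∑ φ(x₂ a₂) x₁ a₁`, so this map is the composite of
`a ⊗ φ ↦ ∑ a₁ ⊗ φ(· a₂)`, the canonical map `A ⊗ A* → Hom(A, A)`, and convolution by `id`. The
first and the last are actions of elements of convolution algebras which the antipode inverts.
-/

open scoped TensorProduct
open Coalgebra HopfAlgebra WithConv

section Cofree

variable {R : Type*} (A : Type*) {P W : Type*} [CommSemiring R] [Semiring A] [Algebra R A]
  [AddCommMonoid P] [Module A P] [Module R P] [IsScalarTower R A P] [AddCommMonoid W] [Module R W]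

/-- The map from an `A`-module `P` to the coinduced module `Hom_R(A, W)` which corresponds to an
`R`-linear map `P → W`. The action of `a` on `Hom_R(A, W)` is precomposition with `(· * a)`. -/
def coextend (t : P →ₗ[R] W) : P →ₗ[R] A →ₗ[R] W :=
  ((Algebra.lsmul R R P).toLinearMap.compr₂ t).flip

@[simp]
lemma coextend_apply (t : P →ₗ[R] W) (p : P) (x : A) : coextend A t p x = t (x • p) := rfl

/-- `IsCofree A t` says that `t : P → W` exhibits `P` as the `A`-module coinduced from the
`R`-module `W`. -/
def IsCofree (t : P →ₗ[R] W) : Prop := Function.Bijective (coextend A t)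

namespace IsCofree

variable {A} {t : P →ₗ[R] W} {V : Type*} [AddCommMonoid V] [Module A V]

lemma comp_linearEquiv {Q : Type*} [AddCommMonoid Q] [Module A Q] [Module R Q]
    [IsScalarTower R A Q] (ht : IsCofree A t) (e : Q ≃ₗ[A] P) :
    IsCofree A (t ∘ₗ (e.restrictScalars R).toLinearMap) := by
  have coextend_eq : ⇑(coextend A (t ∘ₗ (e.restrictScalars R).toLinearMap)) = coextend A t ∘ e := by
    ext; simp
  rw [IsCofree, coextend_eq]
  exact ht.comp e.bijective

lemma hom_ext (ht : IsCofree A t) {f g : V →ₗ[A] P} (h : ∀ v, t (f v) = t (g v)) : f = g := by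
  ext v
  refine ht.injective (LinearMap.ext fun x => ?_)
  simpa using h (x • v)

variable [Module R V] [IsScalarTower R A V]

lemma exists_lift (ht : IsCofree A t) (k : V →ₗ[R] W) : ∃ f : V →ₗ[A] P, ∀ v, t (f v) = k v := by
  choose f hf using fun v : V =>
    ht.surjective (k ∘ₗ (LinearMap.toSpanSingleton A V v).restrictScalars R)
  have t_smul (x : A) (v : V) : t (x • f v) = k (x • v) := by
    simpa using LinearMap.congr_fun (hf v) x
  refine ⟨{ toFun := f, map_add' := fun v w => ?_, map_smul' := fun a v => ?_ }, fun v => ?_⟩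
  · exact ht.injective (LinearMap.ext fun x => by simp [t_smul])
  · exact ht.injective (LinearMap.ext fun x => by simp [t_smul, smul_smul])
  · simpa using t_smul 1 v

variable (V) in
/-- The universal property of coinduced modules: composition with `t`. -/
noncomputable def homEquiv (ht : IsCofree A t) : (V →ₗ[A] P) ≃ₗ[R] (V →ₗ[R] W) :=
  LinearEquiv.ofBijective
    { toFun := fun f => t ∘ₗ f.restrictScalars R
      map_add' := fun f g => by ext; simp
      map_smul' := fun c f => by ext; simp }
    ⟨fun _ _ h => ht.hom_ext (LinearMap.congr_fun h), fun k =>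
      let ⟨f, hf⟩ := ht.exists_lift k
      ⟨f, LinearMap.ext hf⟩⟩

end IsCofree

end Cofree

section ConvolutionAction

variable {R C M : Type*} [CommSemiring R] [AddCommMonoid C] [Module R C] [Coalgebra R C]
  [AddCommMonoid M] [Module R M]

/-- The action `f • (c ⊗ m) = ∑ c₁ ⊗ f(c₂) m` of the convolution algebra of `End_R(M)`-valued maps
on `C ⊗ M`. -/
noncomputable def convAction (f : WithConv (C →ₗ[R] Module.End R M)) : Module.End R (C ⊗[R] M) :=
  (TensorProduct.lift f.ofConv).lTensor C ∘ₗ (TensorProduct.assoc R C C M).toLinearMap ∘ₗ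
    comul.rTensor M

lemma convAction_tmul {ι : Type*} (f : WithConv (C →ₗ[R] Module.End R M)) {c : C}
    (r : Repr R c ι) (m : M) :
    convAction f (c ⊗ₜ m) = ∑ i ∈ r.index, r.left i ⊗ₜ f (r.right i) m := by
  simp [convAction, ← r.eq, TensorProduct.sum_tmul]

lemma convAction_one : convAction (1 : WithConv (C →ₗ[R] Module.End R M)) = 1 := by
  ext c m
  have hcounit := congrArg (TensorProduct.map .id (LinearMap.toSpanSingleton R M m))
    (sum_tmul_counit_eq (ℛ R c))
  simp only [map_sum, TensorProduct.map_tmul, LinearMap.id_apply,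
    LinearMap.toSpanSingleton_apply, one_smul] at hcounit
  simpa only [TensorProduct.AlgebraTensorModule.curry_apply, LinearMap.restrictScalars_self,
    TensorProduct.curry_apply, convAction_tmul _ (ℛ R c), LinearMap.convOne_apply,
    Module.algebraMap_end_apply, Module.End.one_apply] using hcounit

lemma convAction_mul (f g : WithConv (C →ₗ[R] Module.End R M)) :
    convAction (f * g) = convAction f * convAction g := by
  ext c m
  have hcoassoc := congrArg
    (LinearMap.lTensor C (TensorProduct.lift (f.ofConv.compl₂ (g.ofConv.flip m))))
    (sum_tmul_tmul_eq (ℛ R c) (fun i => ℛ R ((ℛ R c).left i)) fun i => ℛ R ((ℛ R c).right i))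
  simpa [convAction_tmul _ (ℛ R _), (ℛ R _).convMul_apply, TensorProduct.tmul_sum]
    using hcoassoc.symm

lemma convAction_bijective {f : WithConv (C →ₗ[R] Module.End R M)} (hf : IsUnit f) :
    Function.Bijective (convAction f) :=
  (Module.End.isUnit_iff _).1 <| hf.map
    ({ toFun := convAction, map_one' := convAction_one, map_mul' := convAction_mul } :
      WithConv (C →ₗ[R] Module.End R M) →* Module.End R (C ⊗[R] M))

/-- The action `a ⊗ φ ↦ φ ⇀ a = ∑ φ(a₂) a₁` of the dual of a coalgebra. -/
noncomputable def leftHit (R C : Type*) [CommSemiring R] [AddCommMonoid C] [Module R C]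
    [Coalgebra R C] : C ⊗[R] Module.Dual R C →ₗ[R] C :=
  (TensorProduct.rid R C).toLinearMap ∘ₗ (contractRight R C).lTensor C ∘ₗ
    (TensorProduct.assoc R C C (Module.Dual R C)).toLinearMap ∘ₗ comul.rTensor (Module.Dual R C)

lemma leftHit_tmul {ι : Type*} {c : C} (r : Repr R c ι) (φ : Module.Dual R C) :
    leftHit R C (c ⊗ₜ φ) = ∑ i ∈ r.index, φ (r.right i) • r.left i := by
  simp [leftHit, ← r.eq, TensorProduct.sum_tmul]

end ConvolutionAction

section HopfAlgebra

/-- The left action `(a φ)(x) = φ(x a)` of an algebra on its dual. -/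
def dualAction (R A : Type*) [CommSemiring R] [Semiring A] [Algebra R A] :
    A →ₐ[R] Module.End R (Module.Dual R A) :=
  AlgHom.ofLinearMap (Module.Dual.transpose ∘ₗ (LinearMap.mul R A).flip)
    (by ext; simp [Module.Dual.transpose_apply])
    (fun a b => by ext; simp [Module.Dual.transpose_apply, mul_assoc])

@[simp]
lemma dualAction_apply {R A : Type*} [CommSemiring R] [Semiring A] [Algebra R A] (a x : A)
    (φ : Module.Dual R A) : dualAction R A a φ x = φ (x * a) := rfl

lemma isUnit_toConv_algHom {R A B : Type*} [CommSemiring R] [Semiring A] [HopfAlgebra R A]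
    [Semiring B] [Algebra R B] (α : A →ₐ[R] B) : IsUnit (toConv α.toLinearMap) := by
  have comp_one : α.toLinearMap ∘ₗ (1 : WithConv (A →ₗ[R] A)).ofConv =
      (1 : WithConv (A →ₗ[R] B)).ofConv := by
    ext; simp [LinearMap.convOne_def]
  have distrib (f g : WithConv (A →ₗ[R] A)) := LinearMap.algHom_comp_convMul_distrib α f g
  refine ⟨⟨toConv α.toLinearMap, toConv (α.toLinearMap ∘ₗ antipode R), ofConv_injective ?_,
    ofConv_injective ?_⟩, rfl⟩
  · simpa [comp_one] using (distrib (toConv .id) (toConv (antipode R))).symm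
  · simpa [comp_one] using (distrib (toConv (antipode R)) (toConv .id)).symm

lemma coextend_leftHit {R A : Type*} [CommSemiring R] [Semiring A] [Bialgebra R A]
    (z : A ⊗[R] Module.Dual R A) :
    coextend A (leftHit R A) z = (toConv LinearMap.id * toConv (dualTensorHom R A A
      (TensorProduct.comm R _ _ (convAction (toConv (dualAction R A).toLinearMap) z)))).ofConv := by
  induction z with
  | zero => simp
  | add z w hz hw => simp [hz, hw, mul_add]
  | tmul a φ =>
    ext x
    simp [TensorProduct.smul_tmul', leftHit_tmul ((ℛ R x).mul (ℛ R a)),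
      convAction_tmul _ (ℛ R a), (ℛ R x).convMul_apply, Finset.sum_product, Finset.mul_sum,
      Finset.sum_comm (s := (ℛ R x).index)]

theorem isCofree_leftHit (R A : Type*) [CommSemiring R] [Semiring A] [HopfAlgebra R A]
    [Module.Finite R A] [Module.Projective R A] : IsCofree A (leftHit R A) := by
  have dualAction_bijective := convAction_bijective (isUnit_toConv_algHom (dualAction R A))
  have id_mul_bijective : Function.Bijective (toConv (LinearMap.id (R := R) (M := A)) * ·) :=
    IsUnit.isUnit_iff_mulLeft_bijective.1 (isUnit_toConv_algHom (AlgHom.id R A))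
  have coextend_eq : ⇑(coextend A (leftHit R A)) =
      ofConv ∘ (toConv (LinearMap.id (R := R) (M := A)) * ·) ∘ toConv ∘ dualTensorHom R A A ∘
        TensorProduct.comm R A (Module.Dual R A) ∘
          convAction (toConv (dualAction R A).toLinearMap) :=
    funext coextend_leftHit
  rw [IsCofree, coextend_eq]
  exact ofConv_bijective.comp <| id_mul_bijective.comp <| toConv_bijective.comp <|
    dualTensorHom_bijective.comp <| (TensorProduct.comm R A _).bijective.comp dualAction_bijective

/-- If `A` has a basis `b`, then `A ⊗ A*` is a power of `A`, so `A`-linear maps to that power are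
the same as linear maps to `A`. -/
noncomputable def piHomEquivOfBasis {R A ι : Type*} [CommSemiring R] [Semiring A]
    [HopfAlgebra R A] [Fintype ι] (b : Module.Basis ι R A) (V : Type*) [AddCommMonoid V]
    [Module A V] [Module R V] [IsScalarTower R A V] : (ι → V →ₗ[A] A) ≃ₗ[R] (V →ₗ[R] A) :=
  open scoped Classical in
  have : Module.Finite R A := .of_basis b
  have : Module.Projective R A := .of_basis b
  let e : A ⊗[R] Module.Dual R A ≃ₗ[A] (ι → A) :=
    (Algebra.TensorProduct.basis A b.dualBasis).equivFun
  LinearEquiv.linearMapPi R ≪≫ₗ ((isCofree_leftHit R A).comp_linearEquiv e.symm).homEquiv V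

end HopfAlgebra

lemma finrank_fun_of_isDomain (R M ι : Type*) [CommRing R] [IsDomain R] [AddCommGroup M]
    [Module R M] [Fintype ι] : Module.finrank R (ι → M) = Fintype.card ι * Module.finrank R M := by
  let S := nonZeroDivisors R
  let K := FractionRing R
  let N := LocalizedModule S M
  let f : M →ₗ[R] N := LocalizedModule.mkLinearMap S M
  calc Module.finrank R (ι → M) = Module.finrank R (ι → N) :=
        (IsLocalizedModule.finrank_eq S (.pi fun i : ι => f ∘ₗ .proj i) le_rfl).symm
    _ = Module.finrank K (ι → N) := (IsFractionRing.finrank_right_eq R K _).symm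
    _ = Fintype.card ι * Module.finrank K N := by simp [Module.finrank, rank_pi]
    _ = Fintype.card ι * Module.finrank R N := by rw [IsFractionRing.finrank_right_eq R K N]
    _ = Fintype.card ι * Module.finrank R M := by rw [IsLocalizedModule.finrank_eq S f le_rfl]

theorem stmt9_general (R : Type*) [CommRing R] [IsDomain R] (A : Type*) [Ring A] [HopfAlgebra R A]
    [Module.Finite R A] [Module.Free R A]
    (V : Type*) [AddCommGroup V] [Module A V] [Module R V] [IsScalarTower R A V]
    [Module.Finite R V] [Module.Free R V] :
    Module.finrank R (V →ₗ[A] A) = Module.finrank R V := by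
  have : Nontrivial A := (Bialgebra.counitAlgHom R A).toRingHom.domain_nontrivial
  refine Nat.eq_of_mul_eq_mul_left (Module.finrank_pos (R := R) (M := A)) ?_
  calc Module.finrank R A * Module.finrank R (V →ₗ[A] A)
      = Module.finrank R (Fin (Module.finrank R A) → V →ₗ[A] A) := by
        rw [finrank_fun_of_isDomain, Fintype.card_fin]
    _ = Module.finrank R (V →ₗ[R] A) := (piHomEquivOfBasis (Module.finBasis R A) V).finrank_eq
    _ = Module.finrank R A * Module.finrank R V := by rw [Module.finrank_linearMap, mul_comm]

/-- Proposition 2.18 / A.14(ii) of the paper. For a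
finite-dimensional Hopf algebra `A` over a field `F` and a finite-dimensional
`A`-module `V`, one has `dim_F Hom_A(V, A) = dim_F V`. -/
theorem stmt9 (F : Type*) [Field F] (A : Type*) [Ring A] [HopfAlgebra F A]
    [FiniteDimensional F A]
    (V : Type*) [AddCommGroup V] [Module A V] [Module F V] [IsScalarTower F A V]
    [FiniteDimensional F V] :
    Module.finrank F (V →ₗ[A] A) = Module.finrank F V := by
  exact stmt9_general F A V
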